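/- Eigenfunction property of the quotient Wronskians (equation (E12) of Lemma 2, an instance of Crum's theorem). For every 0 ≤ i ≤ m and every φ at which W(φ) ≠ 0, the function Ψ_i satisfies −Ψ_i''(φ) − 2·(d²/dφ²)(log W)(φ)·Ψ_i(φ) = k_i²·Ψ_i(φ); that is, Ψ_i is an eigenfunction with eigenvalue k_i² of the one-dimensional Schrödinger operator L = −d²/dφ² − 2 (log W)''. -/

import Mathlib

/-- The Wronskian of a family of `n` real functions: the determinant of the
`n × n` matrix whose `(i, j)`-entry is the `j`-th derivative of the `i`-th function. -/
noncomputable def wronsk {n : ℕ} (f : Fin n → ℝ → ℝ) (t : ℝ) : ℝ :=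
  (Matrix.of fun i j : Fin n => iteratedDeriv (j : ℕ) (f i) t).det

/-- The functions `χ_i(φ) = cos(k_i φ + θ_i)`. -/
noncomputable def chiF (m : ℕ) (k : Fin (m + 1) → ℤ) (θ : Fin (m + 1) → ℝ)
    (i : Fin (m + 1)) : ℝ → ℝ :=
  fun φ => Real.cos ((k i : ℝ) * φ + θ i)

/-- `W(φ) = Wr[χ_0, …, χ_m](φ)`. -/
noncomputable def Wfn (m : ℕ) (k : Fin (m + 1) → ℤ) (θ : Fin (m + 1) → ℝ) : ℝ → ℝ :=
  wronsk (chiF m k θ)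

/-- `Ψ_i(φ) = Wr[χ_0, …, χ_{i-1}, χ_{i+1}, …, χ_m](φ) / W(φ)`. -/
noncomputable def PsiF (m : ℕ) (k : Fin (m + 1) → ℤ) (θ : Fin (m + 1) → ℝ)
    (i : Fin (m + 1)) : ℝ → ℝ :=
  fun φ => wronsk (fun j : Fin m => chiF m k θ (i.succAbove j)) φ / Wfn m k θ φ

/-- `c_i = ∏_{j ≠ i} (k_i² − k_j²)`. -/
noncomputable def cF (m : ℕ) (k : Fin (m + 1) → ℤ) (i : Fin (m + 1)) : ℝ :=
  ∏ j ∈ Finset.univ.erase i, ((k i : ℝ) ^ 2 - (k j : ℝ) ^ 2)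

/-- The Hadamard coefficients `U_ν` in polar coordinates:
`U_ν = ((−2)^ν/(rρ)^ν) ∑_i c_i Ψ_i(φ) Ψ_i(ϕ) T_{k_i}^{(ν)}(cos(φ − ϕ))`. -/
noncomputable def Ucoef (m : ℕ) (k : Fin (m + 1) → ℤ) (θ : Fin (m + 1) → ℝ)
    (ν : ℕ) (r φ ρ ϕ : ℝ) : ℝ :=
  ((-2 : ℝ) ^ ν / (r * ρ) ^ ν) *
    ∑ i, cF m k i * PsiF m k θ i φ * PsiF m k θ i ϕ *
      (Polynomial.derivative^[ν] (Polynomial.Chebyshev.T ℝ (k i))).eval (Real.cos (φ - ϕ))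

/-- The potential `V_k` in polar coordinates: `V_k = −(2/r²)·(d²/dφ²) log W(φ)`. -/
noncomputable def Vpot (m : ℕ) (k : Fin (m + 1) → ℤ) (θ : Fin (m + 1) → ℝ)
    (r φ : ℝ) : ℝ :=
  -(2 / r ^ 2) * deriv (deriv fun t => Real.log (Wfn m k θ t)) φ

/-- First partial derivative in the first variable. -/
noncomputable def pdx (f : ℝ × ℝ → ℝ) (x : ℝ × ℝ) : ℝ := deriv (fun s => f (s, x.2)) x.1

/-- First partial derivative in the second variable. -/
noncomputable def pdy (f : ℝ × ℝ → ℝ) (x : ℝ × ℝ) : ℝ := deriv (fun s => f (x.1, s)) x.2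

/-- The Laplacian on `ℝ²`. -/
noncomputable def lap2 (f : ℝ × ℝ → ℝ) (x : ℝ × ℝ) : ℝ := pdx (pdx f) x + pdy (pdy f) x

open scoped ContDiff Topology

/-!
Expanding along the last column shows that the signed quotients `u_i = (-1)^(i+m) Ψ_i` satisfy
`∑ u_i v_i = det(Wronskian matrix with last column v) / W` for every vector `v`. Hence
`∑ u_i f_i^(j) = δ_{jm}` for `j ≤ m`, while `∑ u_i f_i^(m+1) = W' / W = (log W)'`. Taking
`g_i = f_i^(j)` in `∑ (u_i'' g_i - u_i g_i'') = (∑ u_i g_i)'' - 2 (∑ u_i g_i')'` gives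
`∑ (u_i'' f_i^(j) - u_i f_i^(j+2)) = -2 δ_{jm} (log W)''`. If `-f_i'' + V f_i = c_i f_i`, the
Leibniz rule for `(V f_i)^(j)` turns this into the orthogonality of the vector
`-u_i'' + (V - 2 (log W)'') u_i - c_i u_i` to every column of the Wronskian matrix, so it vanishes
wherever `W ≠ 0`.
-/

section MatrixDeterminant

variable {ι 𝕜 𝔸 : Type*} [Fintype ι] [DecidableEq ι] [NontriviallyNormedField 𝕜]
  [NormedCommRing 𝔸] [NormedAlgebra 𝕜 𝔸]

theorem contDiff_matrix_det {E : Type*} [NormedAddCommGroup E] [NormedSpace 𝕜 E] {N : ℕ∞ω}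
    {A : E → Matrix ι ι 𝔸} (hA : ∀ i j, ContDiff 𝕜 N fun x => A x i j) :
    ContDiff 𝕜 N fun x => (A x).det := by
  simp only [Matrix.det_apply']
  exact ContDiff.sum fun σ _ => contDiff_const.mul (contDiff_prod fun j _ => hA (σ j) j)

theorem hasDerivAt_matrix_det {A : 𝕜 → Matrix ι ι 𝔸} {A' : Matrix ι ι 𝔸} {t : 𝕜}
    (hA : ∀ i j, HasDerivAt (fun s => A s i j) (A' i j) t) :
    HasDerivAt (fun s => (A s).det) (∑ j, ((A t).updateCol j fun i => A' i j).det) t := by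
  simp only [Matrix.det_apply']
  rw [Finset.sum_comm]
  refine HasDerivAt.fun_sum fun σ _ => ?_
  rw [← Finset.mul_sum]
  refine HasDerivAt.const_mul _ ((HasDerivAt.fun_finsetProd fun j _ => hA (σ j) j).congr_deriv ?_)
  refine Finset.sum_congr rfl fun j _ => ?_
  rw [← Finset.mul_prod_erase Finset.univ _ (Finset.mem_univ j), Matrix.updateCol_self,
    smul_eq_mul, mul_comm]
  congr 1
  exact Finset.prod_congr rfl fun l hl => by rw [Matrix.updateCol_ne (Finset.ne_of_mem_erase hl)]

end MatrixDeterminant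

theorem sum_deriv_deriv_mul_sub_mul_deriv_deriv {ι 𝕜 𝔸 : Type*} [NontriviallyNormedField 𝕜]
    [NormedRing 𝔸] [NormedAlgebra 𝕜 𝔸] (s : Finset ι) {u g : ι → 𝕜 → 𝔸} {t : 𝕜}
    (hu : ∀ i ∈ s, ContDiffAt 𝕜 2 (u i) t) (hg : ∀ i ∈ s, ContDiffAt 𝕜 2 (g i) t) :
    ∑ i ∈ s, (deriv (deriv (u i)) t * g i t - u i t * deriv (deriv (g i)) t) =
      deriv (deriv fun x => ∑ i ∈ s, u i x * g i x) t -
        2 * deriv (fun x => ∑ i ∈ s, u i x * deriv (g i) x) t := by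
  have hdu : ∀ i ∈ s, DifferentiableAt 𝕜 (u i) t := fun i hi =>
    (hu i hi).differentiableAt two_ne_zero
  have hdg : ∀ i ∈ s, DifferentiableAt 𝕜 (deriv (g i)) t := fun i hi =>
    ((hg i hi).derivWithin (m := 1) (by norm_num)).differentiableAt one_ne_zero
  have hsecond (f : 𝕜 → 𝔸) : deriv (deriv f) = iteratedDeriv 2 f := by
    rw [iteratedDeriv_succ, iteratedDeriv_one]
  rw [deriv_fun_sum fun i hi => (hdu i hi).fun_mul (hdg i hi), Finset.mul_sum]
  simp only [hsecond]
  rw [iteratedDeriv_fun_sum fun i hi => (hu i hi).mul (hg i hi), ← Finset.sum_sub_distrib]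
  refine Finset.sum_congr rfl fun i hi => ?_
  have hmul : iteratedDeriv 2 (fun x => u i x * g i x) t = u i t * iteratedDeriv 2 (g i) t +
      2 * deriv (u i) t * deriv (g i) t + iteratedDeriv 2 (u i) t * g i t := by
    rw [iteratedDeriv_fun_mul (hu i hi) (hg i hi)]
    simp [Finset.sum_range_succ, iteratedDeriv_one]
  rw [hmul, deriv_fun_mul (hdu i hi) (hdg i hi), hsecond]
  noncomm_ring

theorem contDiff_iteratedDeriv {𝕜 F : Type*} [NontriviallyNormedField 𝕜] [NormedAddCommGroup F]
    [NormedSpace 𝕜 F] {N j : ℕ} {g : 𝕜 → F} (hg : ContDiff 𝕜 (N + j : ℕ) g) :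
    ContDiff 𝕜 N (iteratedDeriv j g) := by
  rw [iteratedDeriv_eq_iterate]
  exact hg.iterate_deriv' N j

/-- The Wronskian matrix, whose determinant is `wronsk f t` by definition. -/
noncomputable def wronskMatrix {n : ℕ} (f : Fin n → ℝ → ℝ) (t : ℝ) : Matrix (Fin n) (Fin n) ℝ :=
  Matrix.of fun i j => iteratedDeriv (j : ℕ) (f i) t

/-- The quotient Wronskian `Wr[f_0, …, f_{i-1}, f_{i+1}, …, f_m] / Wr[f_0, …, f_m]` of an arbitrary
family; `PsiF` is the case of the family `chiF`. -/
noncomputable def wronskQuot {m : ℕ} (f : Fin (m + 1) → ℝ → ℝ) (i : Fin (m + 1)) (t : ℝ) : ℝ :=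
  wronsk (fun j => f (i.succAbove j)) t / wronsk f t

/-- The quotient Wronskian with its cofactor sign: the `i`-th entry of the last row of the inverse
Wronskian matrix. -/
noncomputable def wronskDual {m : ℕ} (f : Fin (m + 1) → ℝ → ℝ) (i : Fin (m + 1)) (t : ℝ) : ℝ :=
  (-1) ^ ((i : ℕ) + m) * wronskQuot f i t

/-- The one-dimensional Schrödinger operator `−d²/dt² + V`. -/
noncomputable def schrodinger (V u : ℝ → ℝ) (t : ℝ) : ℝ :=
  -deriv (deriv u) t + V t * u t

theorem contDiff_wronsk {n k N : ℕ} {f : Fin n → ℝ → ℝ} (hf : ∀ i, ContDiff ℝ k (f i))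
    (hN : N + n ≤ k + 1) : ContDiff ℝ N (wronsk f) :=
  contDiff_matrix_det fun i j => contDiff_iteratedDeriv ((hf i).of_le (by norm_cast; lia))

section Wronskian

variable {m : ℕ} {f : Fin (m + 1) → ℝ → ℝ} {t : ℝ}

/-- Differentiating any column but the last one duplicates the next column. -/
theorem hasDerivAt_wronsk (hf : ∀ i, ContDiff ℝ (m + 1 : ℕ) (f i)) (t : ℝ) :
    HasDerivAt (wronsk f)
      ((wronskMatrix f t).updateCol (Fin.last m) fun i => iteratedDeriv (m + 1) (f i) t).det t := by
  have hentry (i j : Fin (m + 1)) : HasDerivAt (fun s => wronskMatrix f s i j)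
      (iteratedDeriv (j + 1) (f i) t) t := by
    rw [iteratedDeriv_succ]
    exact ((hf i).differentiable_iteratedDeriv j (by exact_mod_cast j.isLt) t).hasDerivAt
  refine (hasDerivAt_matrix_det (A' := Matrix.of fun i j : Fin (m + 1) =>
    iteratedDeriv (j + 1) (f i) t) hentry).congr_deriv ?_
  rw [Fin.sum_univ_castSucc, Finset.sum_eq_zero fun j _ => ?_, zero_add]
  · simp
  · refine Matrix.det_zero_of_column_eq (Fin.castSucc_lt_succ (i := j)).ne fun i => ?_
    rw [Matrix.updateCol_self, Matrix.updateCol_ne Fin.castSucc_lt_succ.ne']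
    simp [wronskMatrix]

theorem eventually_wronsk_ne_zero (hf : ∀ i, ContDiff ℝ m (f i)) (hW : wronsk f t ≠ 0) :
    ∀ᶠ s in 𝓝 t, wronsk f s ≠ 0 :=
  (contDiff_wronsk (N := 0) hf (by lia)).continuous.continuousAt.eventually_ne hW

theorem contDiffAt_wronskDual {N : ℕ} (hf : ∀ i, ContDiff ℝ (N + m : ℕ) (f i))
    (hW : wronsk f t ≠ 0) (i : Fin (m + 1)) : ContDiffAt ℝ N (wronskDual f i) t :=
  contDiffAt_const.mul
    ((contDiff_wronsk (fun j => hf (i.succAbove j)) (by lia)).contDiffAt.div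
      (contDiff_wronsk hf (by lia)).contDiffAt hW)

theorem sum_wronskDual_mul (f : Fin (m + 1) → ℝ → ℝ) (v : Fin (m + 1) → ℝ) (t : ℝ) :
    ∑ i, wronskDual f i t * v i =
      ((wronskMatrix f t).updateCol (Fin.last m) v).det / wronsk f t := by
  rw [Matrix.det_succ_column _ (Fin.last m), Finset.sum_div]
  refine Finset.sum_congr rfl fun i _ => ?_
  have hminor : ((wronskMatrix f t).submatrix i.succAbove Fin.castSucc).det =
      wronsk (fun j => f (i.succAbove j)) t := rfl
  rw [Matrix.submatrix_updateCol_succAbove, Matrix.updateCol_self, Fin.succAbove_last, hminor,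
    Fin.val_last, wronskDual, wronskQuot]
  ring

theorem sum_wronskDual_mul_iteratedDeriv (hW : wronsk f t ≠ 0) {j : ℕ} (hj : j ≤ m) :
    ∑ i, wronskDual f i t * iteratedDeriv j (f i) t = if j = m then 1 else 0 := by
  rw [sum_wronskDual_mul]
  split_ifs with hjm
  · subst hjm
    have hcol : (fun i => iteratedDeriv j (f i) t) = fun i => wronskMatrix f t i (Fin.last j) := rfl
    rw [hcol, Matrix.updateCol_eq_self]
    exact div_self hW
  · have hlast : (⟨j, Nat.lt_succ_of_le hj⟩ : Fin (m + 1)) ≠ Fin.last m := by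
      simpa [Fin.ext_iff] using hjm
    rw [Matrix.det_zero_of_column_eq hlast fun i => ?_, zero_div]
    rw [Matrix.updateCol_self, Matrix.updateCol_ne hlast]
    rfl

theorem sum_wronskDual_mul_iteratedDeriv_succ (hf : ∀ i, ContDiff ℝ (m + 1 : ℕ) (f i))
    (hW : wronsk f t ≠ 0) :
    ∑ i, wronskDual f i t * iteratedDeriv (m + 1) (f i) t =
      deriv (fun s => Real.log (wronsk f s)) t := by
  rw [sum_wronskDual_mul, ((hasDerivAt_wronsk hf t).log hW).deriv]

theorem sum_wronskDual_mul_iteratedDeriv_mul {V : ℝ → ℝ} (hV : ContDiffAt ℝ m V t)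
    (hf : ∀ i, ContDiffAt ℝ m (f i) t) (hW : wronsk f t ≠ 0) {j : ℕ} (hj : j ≤ m) :
    ∑ i, wronskDual f i t * iteratedDeriv j (fun s => V s * f i s) t =
      if j = m then V t else 0 := by
  have hjm : (j : ℕ∞ω) ≤ m := by exact_mod_cast hj
  have hleibniz (i : Fin (m + 1)) := iteratedDeriv_fun_mul (hV.of_le hjm) ((hf i).of_le hjm)
  simp only [hleibniz, Finset.mul_sum]
  rw [Finset.sum_comm]
  calc ∑ l ∈ Finset.range (j + 1), ∑ i, wronskDual f i t *
        (j.choose l * iteratedDeriv l V t * iteratedDeriv (j - l) (f i) t)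
      = ∑ l ∈ Finset.range (j + 1), j.choose l * iteratedDeriv l V t *
          if j - l = m then 1 else 0 := by
        refine Finset.sum_congr rfl fun l _ => ?_
        rw [← sum_wronskDual_mul_iteratedDeriv hW (by lia), Finset.mul_sum]
        exact Finset.sum_congr rfl fun i _ => mul_left_comm _ _ _
    _ = if j = m then V t else 0 := by
        rw [Finset.sum_range_succ', Finset.sum_eq_zero fun l hl => ?_]
        · simp
        · rw [if_neg (by grind), mul_zero]

theorem sum_deriv_deriv_wronskDual_mul_sub (hf : ∀ i, ContDiff ℝ (m + 2 : ℕ) (f i))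
    (hW : wronsk f t ≠ 0) {j : ℕ} (hj : j ≤ m) :
    ∑ i, (deriv (deriv (wronskDual f i)) t * iteratedDeriv j (f i) t -
        wronskDual f i t * iteratedDeriv (j + 2) (f i) t) =
      if j = m then -2 * deriv (deriv fun s => Real.log (wronsk f s)) t else 0 := by
  have hW' : ∀ᶠ s in 𝓝 t, wronsk f s ≠ 0 :=
    eventually_wronsk_ne_zero (fun i => (hf i).of_le (by norm_cast; lia)) hW
  have hpair : (fun s => ∑ i, wronskDual f i s * iteratedDeriv j (f i) s) =ᶠ[𝓝 t]
      fun _ => if j = m then 1 else 0 :=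
    hW'.mono fun s hs => sum_wronskDual_mul_iteratedDeriv hs hj
  have hpair' : (fun s => ∑ i, wronskDual f i s * iteratedDeriv (j + 1) (f i) s) =ᶠ[𝓝 t]
      fun s => if j = m then deriv (fun x => Real.log (wronsk f x)) s else
        if j + 1 = m then 1 else 0 := by
    filter_upwards [hW'] with s hs
    split_ifs with hjm hjm'
    · rw [hjm, sum_wronskDual_mul_iteratedDeriv_succ (fun i => (hf i).of_le (by norm_cast; lia)) hs]
    all_goals rw [sum_wronskDual_mul_iteratedDeriv hs (by lia)]; simp [hjm']
  simp only [iteratedDeriv_succ (n := j + 1), iteratedDeriv_succ (n := j)]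
  rw [sum_deriv_deriv_mul_sub_mul_deriv_deriv]
  · simp only [← iteratedDeriv_succ]
    rw [hpair.deriv.deriv_eq, hpair'.deriv_eq]
    split_ifs <;> simp
  · exact fun i _ => contDiffAt_wronskDual (N := 2) (fun i => (hf i).of_le (by norm_cast; lia)) hW i
  · exact fun i _ => (contDiff_iteratedDeriv (N := 2)
      ((hf i).of_le (by norm_cast; lia))).contDiffAt

theorem exists_ne_zero_of_wronsk_ne_zero (hW : wronsk f t ≠ 0) : ∃ i, f i t ≠ 0 := by
  by_contra! hzero
  exact hW (Matrix.det_eq_zero_of_column_eq_zero 0 fun i => by simp [hzero])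

end Wronskian

section Schrodinger

variable {V u : ℝ → ℝ} {c t : ℝ}

theorem contDiffAt_potential_of_schrodinger {N : ℕ} (hu : ContDiff ℝ (N + 2 : ℕ) u)
    (h : ∀ s, schrodinger V u s = c * u s) (ht : u t ≠ 0) : ContDiffAt ℝ N V t := by
  have hquot : V =ᶠ[𝓝 t] fun s => (c * u s + iteratedDeriv 2 u s) / u s := by
    filter_upwards [hu.continuous.continuousAt.eventually_ne ht] with s hs
    rw [eq_div_iff hs, ← h s, schrodinger, iteratedDeriv_succ, iteratedDeriv_one]
    ring
  have hu' : ContDiff ℝ N u := hu.of_le (by norm_cast; lia)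
  exact (((contDiff_const.mul hu').add (contDiff_iteratedDeriv hu)).contDiffAt.div
    hu'.contDiffAt ht).congr_of_eventuallyEq hquot

theorem iteratedDeriv_add_two_of_schrodinger {j : ℕ} (hV : ContDiffAt ℝ j V t)
    (hu : ContDiffAt ℝ j u t) (h : ∀ s, schrodinger V u s = c * u s) :
    iteratedDeriv (j + 2) u t =
      iteratedDeriv j (fun s => V s * u s) t - c * iteratedDeriv j u t := by
  have hderiv : deriv (deriv u) = fun s => V s * u s - c * u s :=
    funext fun s => by rw [← h s, schrodinger]; ring
  rw [iteratedDeriv_succ', iteratedDeriv_succ', hderiv,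
    iteratedDeriv_fun_sub (hV.mul hu) (contDiffAt_const.mul hu), iteratedDeriv_const_mul_field]

theorem schrodinger_const_mul (V u : ℝ → ℝ) (c t : ℝ) :
    schrodinger V (fun s => c * u s) t = c * schrodinger V u t := by
  have hderiv (v : ℝ → ℝ) : deriv (fun s => c * v s) = fun s => c * deriv v s :=
    funext fun s => deriv_const_mul_field c
  simp only [schrodinger, hderiv]
  ring

theorem schrodinger_zero_cos (a b t : ℝ) :
    schrodinger (fun _ => 0) (fun s => Real.cos (a * s + b)) t = a ^ 2 * Real.cos (a * t + b) := by
  have hlin (s : ℝ) : HasDerivAt (fun x => a * x + b) a s := by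
    simpa using ((hasDerivAt_id s).const_mul a).add_const b
  have hfirst : deriv (fun s => Real.cos (a * s + b)) = fun s => -Real.sin (a * s + b) * a :=
    funext fun s => (hlin s).cos.deriv
  rw [schrodinger, hfirst, ((hlin t).sin.fun_neg.mul_const a).deriv]
  ring

end Schrodinger

section Crum

variable {m : ℕ} {f : Fin (m + 1) → ℝ → ℝ} {V : ℝ → ℝ} {c : Fin (m + 1) → ℝ} {t : ℝ}

theorem schrodinger_wronskDual (hf : ∀ i, ContDiff ℝ (m + 2 : ℕ) (f i))
    (hfc : ∀ i s, schrodinger V (f i) s = c i * f i s) (hW : wronsk f t ≠ 0)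
    (i : Fin (m + 1)) :
    schrodinger (fun s => V s - 2 * deriv (deriv fun x => Real.log (wronsk f x)) s)
      (wronskDual f i) t = c i * wronskDual f i t := by
  set U : ℝ → ℝ := fun s => V s - 2 * deriv (deriv fun x => Real.log (wronsk f x)) s with hU
  let defect (i : Fin (m + 1)) : ℝ := schrodinger U (wronskDual f i) t - c i * wronskDual f i t
  suffices hdefect : defect = 0 from sub_eq_zero.mp (congrFun hdefect i)
  refine Matrix.eq_zero_of_vecMul_eq_zero (M := wronskMatrix f t) hW (funext fun j => ?_)
  have hj : (j : ℕ) ≤ m := j.is_le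
  obtain ⟨i₀, hi₀⟩ := exists_ne_zero_of_wronsk_ne_zero hW
  have hV : ContDiffAt ℝ m V t := contDiffAt_potential_of_schrodinger (hf i₀) (hfc i₀) hi₀
  have hfm (i : Fin (m + 1)) : ContDiffAt ℝ m (f i) t :=
    ((hf i).of_le (by norm_cast; lia)).contDiffAt
  have hjm : ((j : ℕ) : ℕ∞ω) ≤ m := by exact_mod_cast hj
  have hode (i : Fin (m + 1)) := iteratedDeriv_add_two_of_schrodinger (hV.of_le hjm)
    ((hfm i).of_le hjm) (hfc i)
  calc ∑ i, defect i * iteratedDeriv j (f i) t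
      = U t * (∑ i, wronskDual f i t * iteratedDeriv j (f i) t) -
          (∑ i, wronskDual f i t * iteratedDeriv j (fun s => V s * f i s) t) -
          ∑ i, (deriv (deriv (wronskDual f i)) t * iteratedDeriv j (f i) t -
            wronskDual f i t * iteratedDeriv (j + 2) (f i) t) := by
        rw [Finset.mul_sum, ← Finset.sum_sub_distrib, ← Finset.sum_sub_distrib]
        refine Finset.sum_congr rfl fun i _ => ?_
        rw [hode]
        simp only [defect, schrodinger]
        ring
    _ = 0 := by
        rw [sum_wronskDual_mul_iteratedDeriv hW hj,
          sum_wronskDual_mul_iteratedDeriv_mul hV hfm hW hj,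
          sum_deriv_deriv_wronskDual_mul_sub hf hW hj]
        split_ifs <;> simp [hU]

theorem psi_eigenfunction_general (hf : ∀ i, ContDiff ℝ (m + 2 : ℕ) (f i))
    (hfc : ∀ i s, schrodinger V (f i) s = c i * f i s) (hW : wronsk f t ≠ 0)
    (i : Fin (m + 1)) :
    schrodinger (fun s => V s - 2 * deriv (deriv fun x => Real.log (wronsk f x)) s)
      (wronskQuot f i) t = c i * wronskQuot f i t := by
  have hsign : (-1 : ℝ) ^ ((i : ℕ) + m) ≠ 0 := pow_ne_zero _ (by norm_num)
  have hdual := schrodinger_wronskDual hf hfc hW i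
  unfold wronskDual at hdual
  rw [schrodinger_const_mul, mul_left_comm] at hdual
  exact mul_left_cancel₀ hsign hdual

end Crum

/-- **Equation (E12) of Lemma 2 (Crum's theorem).** Each quotient Wronskian `Ψ_i` is an
eigenfunction of the one-dimensional Schrödinger operator `L = −d²/dφ² − 2 (log W)''`
with eigenvalue `k_i²`. -/
theorem psi_eigenfunction (m : ℕ) (hm : 1 ≤ m)
    (k : Fin (m + 1) → ℤ) (hk0 : k 0 = 0) (hk : StrictMono k)
    (θ : Fin (m + 1) → ℝ) (hθ0 : θ 0 = 0)
    (i : Fin (m + 1)) (φ : ℝ) (hW : Wfn m k θ φ ≠ 0) :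
    -deriv (deriv (PsiF m k θ i)) φ -
        2 * deriv (deriv fun t => Real.log (Wfn m k θ t)) φ * PsiF m k θ i φ
      = (k i : ℝ) ^ 2 * PsiF m k θ i φ := by
  have hcrum : schrodinger (fun s => 0 - 2 * deriv (deriv fun t => Real.log (Wfn m k θ t)) s)
      (PsiF m k θ i) φ = (k i : ℝ) ^ 2 * PsiF m k θ i φ :=
    psi_eigenfunction_general (f := chiF m k θ) (fun j => by unfold chiF; fun_prop)
      (fun j => schrodinger_zero_cos (k j) (θ j)) hW i
  simpa [schrodinger, sub_eq_add_neg] using hcrum
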